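/- Let Φ: ℝⁿ \ {0} → ℝⁿ \ {0} be the spherical inversion Φ(x) = x/|x|². Equip the target with the weighted measure dμ̂(y) = |y|^{2(p-n)} dy. Let Ω ⊂ ℝⁿ \ {0} be open, Ω̂ = Φ(Ω), u ∈ D^p_loc(Ω) with respect to Lebesgue measure, and û = u ∘ Φ^{-1}. Then the minimal p-weak upper gradients satisfy ĝ_û(y) = g_u(x)/|y|² with y = Φ(x), and the p-energies coincide: ∫_{Ω̂} ĝ_û^p dμ̂ = ∫_Ω g_u^p dx. -/

import Mathlib

/-!
Write `Φ` for the inversion. It is a global involution (with `Φ(0) = 0`), and off the origin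
`|Φ(x) - Φ(y)| = |x - y| / (|x| |y|)`, so it scales lengths by `|x|⁻²` and volume by `|x|^{-2n}`.

Everything rests on the transform `f ↦ |y|⁻² f(Φ(y))` (`invGrad`).

* Along curves: inverting a `1`-Lipschitz curve `γ` and reparametrizing by `∫ |γ|⁻²` gives a
  `1`-Lipschitz curve along which the integral of `ρ` equals the integral of `invGrad ρ` along `γ`
  (`exists_inverted_curve`).
* For energies: if `s + t = 2(p - n)`, the `p`-energy of `f` for `|x|^s dx` equals that of
  `invGrad f` for `|y|^t dy` (`energy_invGrad`), because `-2p + t = -2n - s`.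

Hence curve families of modulus zero, `p`-weak upper gradients and local `p`-integrability are all
transported by the inversion. Taking `(s, t) = (0, 2(p - n))`, `invGrad g` competes with `gh`, so
`gh ≤ invGrad g` almost everywhere. Taking `(s, t) = (2(p - n), 0)`, `invGrad gh` competes with `g`,
so `g ≤ invGrad gh` almost everywhere; as `invGrad` is involutive and monotone off the origin, this
is the reverse inequality. Equality of energies is then the change of variables. Minimal weak upper
gradients are not assumed measurable, so the change of variables is used for arbitrary integrands.
-/

open MeasureTheory Metric Set ENNReal Filter

/-- A (nonconstant, compact, rectifiable) curve with respect to a distance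
function `D`, parameterized by arc length on `[0, len]`
(so that it is `1`-Lipschitz with respect to `D`). -/
structure CurveD (Y : Type*) (D : Y → Y → ℝ) where
  toFun : ℝ → Y
  len : ℝ
  len_pos : 0 < len
  lip : ∀ s ∈ Set.Icc (0:ℝ) len, ∀ t ∈ Set.Icc (0:ℝ) len, D (toFun s) (toFun t) ≤ |s - t|

/-- The curve lies in the set `Ω`. -/
def CurveD.inSet {Y : Type*} {D : Y → Y → ℝ} (γ : CurveD Y D) (Ω : Set Y) : Prop :=
  ∀ t ∈ Set.Icc (0:ℝ) γ.len, γ.toFun t ∈ Ω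

/-- Line integral `∫_γ ρ ds̃`, where the arc length element is `ds̃ = w ds`. -/
noncomputable def lineInt {Y : Type*} {D : Y → Y → ℝ} (γ : CurveD Y D) (ρ w : Y → ℝ≥0∞) : ℝ≥0∞ :=
  ∫⁻ t in Set.Icc (0:ℝ) γ.len, ρ (γ.toFun t) * w (γ.toFun t)

/-- The `p`-modulus of a curve family `Γ`, with energy measure `μ` and arc
length weighted by `w`. -/
noncomputable def pMod {Y : Type*} [MeasurableSpace Y] {D : Y → Y → ℝ} (p : ℝ) (μ : Measure Y)
    (w : Y → ℝ≥0∞) (Γ : Set (CurveD Y D)) : ℝ≥0∞ :=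
  ⨅ (ρ : Y → ℝ≥0∞) (_ : Measurable ρ) (_ : ∀ γ ∈ Γ, 1 ≤ lineInt γ ρ w), ∫⁻ y, ρ y ^ p ∂μ

/-- The absolute value of an extended real, as an element of `[0,∞]`. -/
noncomputable def eAbs (x : EReal) : ℝ≥0∞ :=
  if max x (-x) = (⊤ : EReal) then ⊤ else ENNReal.ofReal (max x (-x)).toReal

/-- `g` is an upper gradient of `u : Ω → [-∞,∞]` (arc length weighted by `w`). -/
def IsUpperGradientOn {Y : Type*} (D : Y → Y → ℝ) (w : Y → ℝ≥0∞) (Ω : Set Y)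
    (u : Y → EReal) (g : Y → ℝ≥0∞) : Prop :=
  ∀ γ : CurveD Y D, γ.inSet Ω →
    eAbs (u (γ.toFun γ.len) - u (γ.toFun 0)) ≤ lineInt γ g w

/-- `g` is a `p`-weak upper gradient of `u` in `Ω`: the upper gradient
inequality holds along `p`-almost every curve. -/
def IsPWUGOn {Y : Type*} [MeasurableSpace Y] (D : Y → Y → ℝ) (p : ℝ) (μ : Measure Y)
    (w : Y → ℝ≥0∞) (Ω : Set Y) (u : Y → EReal) (g : Y → ℝ≥0∞) : Prop :=
  ∃ Γ₀ : Set (CurveD Y D), pMod p μ w Γ₀ = 0 ∧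
    ∀ γ : CurveD Y D, γ.inSet Ω → γ ∉ Γ₀ →
      eAbs (u (γ.toFun γ.len) - u (γ.toFun 0)) ≤ lineInt γ g w

/-- `g` has locally finite `p`-energy in `Ω`. -/
def IsLocLp {Y : Type*} [MetricSpace Y] [MeasurableSpace Y] (p : ℝ) (μ : Measure Y)
    (Ω : Set Y) (g : Y → ℝ≥0∞) : Prop :=
  ∀ x ∈ Ω, ∃ r > (0:ℝ), ∫⁻ y in Ω ∩ Metric.ball x r, g y ^ p ∂μ < ⊤

/-- `g` is the minimal `p`-weak upper gradient of `u` in `Ω`. -/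
def IsMinimalPWUGOn {Y : Type*} [MetricSpace Y] [MeasurableSpace Y] (D : Y → Y → ℝ) (p : ℝ)
    (μ : Measure Y) (w : Y → ℝ≥0∞) (Ω : Set Y) (u : Y → EReal) (g : Y → ℝ≥0∞) : Prop :=
  IsPWUGOn D p μ w Ω u g ∧ IsLocLp p μ Ω g ∧
    ∀ h : Y → ℝ≥0∞, IsPWUGOn D p μ w Ω u h → IsLocLp p μ Ω h →
      ∀ᵐ x ∂(μ.restrict Ω), g x ≤ h x

/-- The `p`-th power of the Newtonian norm of `u` on `Ω`. -/
noncomputable def NpNormP {Y : Type*} [MeasurableSpace Y] (D : Y → Y → ℝ) (p : ℝ)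
    (μ : Measure Y) (w : Y → ℝ≥0∞) (Ω : Set Y) (u : Y → EReal) : ℝ≥0∞ :=
  (∫⁻ x in Ω, eAbs (u x) ^ p ∂μ) +
    ⨅ (g : Y → ℝ≥0∞) (_ : IsUpperGradientOn D w Ω u g), ∫⁻ x in Ω, g x ^ p ∂μ

/-- The Sobolev capacity of `E`. -/
noncomputable def sobCap {Y : Type*} [MeasurableSpace Y] (D : Y → Y → ℝ) (p : ℝ)
    (μ : Measure Y) (w : Y → ℝ≥0∞) (E : Set Y) : ℝ≥0∞ :=
  ⨅ (u : Y → EReal) (_ : ∀ x ∈ E, 1 ≤ u x), NpNormP D p μ w Set.univ u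

/-- The sphericalized arc length weight `ds̃ = ds/(1+d(x,a))²`. -/
noncomputable def hatW {X : Type*} [MetricSpace X] (a : X) : X → ℝ≥0∞ :=
  fun x => ENNReal.ofReal ((1 + dist x a) ^ 2)⁻¹

/-- The sphericalization measure `dμ̂ₐ = dμ/(1+d(x,a))^{2p}`. -/
noncomputable def muHat {X : Type*} [MetricSpace X] [MeasurableSpace X] (μ : Measure X)
    (a : X) (p : ℝ) : Measure X :=
  μ.withDensity fun x => ENNReal.ofReal ((1 + dist x a) ^ (2 * p))⁻¹

/-- A `q`-Poincaré inequality for `(X,d,μ)`. -/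
def PoincareIneqP {X : Type*} [MetricSpace X] [MeasurableSpace X] (q : ℝ) (μ : Measure X) : Prop :=
  ∃ C > (0:ℝ), ∃ lam ≥ (1:ℝ), ∀ (u : X → ℝ) (g : X → ℝ≥0∞), Measurable u → Measurable g →
    MeasureTheory.LocallyIntegrable u μ →
    IsUpperGradientOn dist (fun _ => 1) Set.univ (fun x => (u x : EReal)) g →
    ∀ (x : X) (r : ℝ), 0 < r →
      ⨍⁻ y in Metric.ball x r, ENNReal.ofReal |u y - ⨍ z in Metric.ball x r, u z ∂μ| ∂μ ≤
        ENNReal.ofReal (C * Metric.diam (Metric.ball x r)) *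
          (⨍⁻ y in Metric.ball x (lam * r), g y ^ q ∂μ) ^ (1/q)

/-- `μ` is doubling and all balls have positive finite measure. -/
def DoublingMeas {X : Type*} [MetricSpace X] [MeasurableSpace X] (μ : Measure X) : Prop :=
  (∀ (x : X) (r : ℝ), 0 < r → 0 < μ (Metric.ball x r) ∧ μ (Metric.ball x r) < ⊤) ∧
    ∃ C > (0:ℝ), ∀ (x : X) (r : ℝ), 0 < r →
      μ (Metric.ball x (2 * r)) ≤ ENNReal.ofReal C * μ (Metric.ball x r)

/-- `μ` is Ahlfors `Q`-regular. -/
def AhlforsRegular {X : Type*} [MetricSpace X] [MeasurableSpace X] (μ : Measure X) (Q : ℝ) : Prop :=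
  ∃ C > (0:ℝ), ∀ (x : X) (r : ℝ), 0 < r →
    ENNReal.ofReal (C⁻¹ * r ^ Q) ≤ μ (Metric.ball x r) ∧
      μ (Metric.ball x r) ≤ ENNReal.ofReal (C * r ^ Q)

/-- The spherical inversion `x ↦ x / |x|²`; the junk value `0⁻¹ = 0` makes it fix the origin. -/
noncomputable def sphInv {n : ℕ} (x : EuclideanSpace ℝ (Fin n)) : EuclideanSpace ℝ (Fin n) :=
  (‖x‖ ^ 2)⁻¹ • x

/-- The measure `|y|^s dy`. -/
noncomputable def powMeas (n : ℕ) (s : ℝ) : Measure (EuclideanSpace ℝ (Fin n)) :=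
  volume.withDensity fun y => ENNReal.ofReal (‖y‖ ^ s)

/-- The transform `f ↦ |y|⁻² f(Φ(y))` of densities along curves under the inversion `Φ`. -/
noncomputable def invGrad {n : ℕ} (f : EuclideanSpace ℝ (Fin n) → ℝ≥0∞) :
    EuclideanSpace ℝ (Fin n) → ℝ≥0∞ :=
  fun y => f (sphInv y) * ENNReal.ofReal (‖y‖ ^ 2)⁻¹

/-! ### The inversion and its change of variables -/

section Inversion

variable {n : ℕ}

lemma norm_sphInv (x : EuclideanSpace ℝ (Fin n)) : ‖sphInv x‖ = ‖x‖⁻¹ := by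
  rcases eq_or_ne x 0 with rfl | hx
  · simp [sphInv]
  · have := norm_ne_zero_iff.2 hx
    rw [sphInv, norm_smul, norm_inv, norm_pow, norm_norm]
    field_simp

lemma sphInv_sphInv (x : EuclideanSpace ℝ (Fin n)) : sphInv (sphInv x) = x := by
  rcases eq_or_ne x 0 with rfl | hx
  · simp [sphInv]
  · have := norm_ne_zero_iff.2 hx
    rw [sphInv, norm_sphInv, sphInv, smul_smul]
    rw [show ((‖x‖⁻¹ ^ 2)⁻¹ * (‖x‖ ^ 2)⁻¹ : ℝ) = 1 by field_simp, one_smul]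

lemma sphInv_zero : sphInv (0 : EuclideanSpace ℝ (Fin n)) = 0 := by simp [sphInv]

lemma sphInv_injective : Function.Injective (sphInv (n := n)) :=
  Function.LeftInverse.injective sphInv_sphInv

lemma measurable_sphInv : Measurable (sphInv (n := n)) := by
  unfold sphInv; fun_prop

lemma image_sphInv (A : Set (EuclideanSpace ℝ (Fin n))) : sphInv '' A = sphInv ⁻¹' A :=
  congrFun (Set.image_eq_preimage_of_inverse sphInv_sphInv sphInv_sphInv) A

lemma sphInv_image_image (A : Set (EuclideanSpace ℝ (Fin n))) : sphInv '' (sphInv '' A) = A := by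
  rw [Set.image_image]; simp [sphInv_sphInv]

lemma zero_notMem_image {A : Set (EuclideanSpace ℝ (Fin n))}
    (h : (0 : EuclideanSpace ℝ (Fin n)) ∉ A) :
    (0 : EuclideanSpace ℝ (Fin n)) ∉ sphInv '' A := by
  rw [image_sphInv, mem_preimage, sphInv_zero]; exact h

lemma sphInv_eq_inversion : sphInv (n := n) = EuclideanGeometry.inversion 0 1 := by
  funext x
  simp [sphInv, EuclideanGeometry.inversion]

lemma dist_sphInv {x y : EuclideanSpace ℝ (Fin n)} (hx : x ≠ 0) (hy : y ≠ 0) :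
    dist (sphInv x) (sphInv y) = (‖x‖ * ‖y‖)⁻¹ * dist x y := by
  rw [sphInv_eq_inversion, EuclideanGeometry.dist_inversion_inversion hx hy]
  simp

lemma abs_det_reflection (K : Submodule ℝ (EuclideanSpace ℝ (Fin n))) :
    |LinearMap.det (K.reflection.toLinearEquiv :
      EuclideanSpace ℝ (Fin n) →ₗ[ℝ] EuclideanSpace ℝ (Fin n))| = 1 := by
  have h : (K.reflection.toLinearEquiv :
      EuclideanSpace ℝ (Fin n) →ₗ[ℝ] EuclideanSpace ℝ (Fin n)) ∘ₗ
      (K.reflection.toLinearEquiv :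
        EuclideanSpace ℝ (Fin n) →ₗ[ℝ] EuclideanSpace ℝ (Fin n)) = LinearMap.id :=
    LinearMap.ext fun v => Submodule.reflection_reflection K v
  have h' := congrArg LinearMap.det h
  rw [LinearMap.det_comp, LinearMap.det_id] at h'
  rcases mul_self_eq_one_iff.1 h' with h | h <;> rw [h] <;> simp

/-- The inversion is conformal with factor `|x|⁻²`, hence has Jacobian `|x|^{-2n}`. -/
lemma sphInv_hasFDerivAt {x : EuclideanSpace ℝ (Fin n)} (hx : x ≠ 0) :
    ∃ A : EuclideanSpace ℝ (Fin n) →L[ℝ] EuclideanSpace ℝ (Fin n),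
      HasFDerivAt sphInv A x ∧ |A.det| = ((‖x‖ ^ 2)⁻¹) ^ n := by
  refine ⟨_, sphInv_eq_inversion ▸ EuclideanGeometry.hasFDerivAt_inversion hx, ?_⟩
  rw [ContinuousLinearMap.det, ContinuousLinearMap.toLinearMap_smul, LinearMap.det_smul, abs_mul]
  refine (congrArg _ (abs_det_reflection _)).trans ?_
  simp

/-- Change of variables for the inversion; the integrand need not be measurable. -/
lemma lintegral_image_sphInv {A : Set (EuclideanSpace ℝ (Fin n))} (hA : MeasurableSet A)
    (h0 : (0 : EuclideanSpace ℝ (Fin n)) ∉ A) (f : EuclideanSpace ℝ (Fin n) → ℝ≥0∞) :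
    ∫⁻ y in sphInv '' A, f y = ∫⁻ x in A, ENNReal.ofReal (((‖x‖ ^ 2)⁻¹) ^ n) * f (sphInv x) := by
  have hne : ∀ x ∈ A, x ≠ 0 := fun x hx h => h0 (h ▸ hx)
  choose! D hD hdet using fun x (hx : x ∈ A) => sphInv_hasFDerivAt (hne x hx)
  rw [lintegral_image_eq_lintegral_abs_det_fderiv_mul volume hA
    (fun x hx => (hD x hx).hasFDerivWithinAt) sphInv_injective.injOn]
  exact setLIntegral_congr_fun hA fun x hx => by simp only [hdet x hx]

lemma volume_image_sphInv_eq_zero {A : Set (EuclideanSpace ℝ (Fin n))}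
    (h0 : (0 : EuclideanSpace ℝ (Fin n)) ∉ A) (hA : volume A = 0) : volume (sphInv '' A) = 0 := by
  refine addHaar_image_eq_zero_of_differentiableOn_of_addHaar_eq_zero volume (fun x hx => ?_) hA
  obtain ⟨D, hD, -⟩ := sphInv_hasFDerivAt (n := n) (x := x) (fun h => h0 (h ▸ hx))
  exact hD.differentiableAt.differentiableWithinAt

lemma setLIntegral_powMeas (s : ℝ) {A : Set (EuclideanSpace ℝ (Fin n))} (hA : MeasurableSet A)
    (f : EuclideanSpace ℝ (Fin n) → ℝ≥0∞) :
    ∫⁻ y in A, f y ∂(powMeas n s) = ∫⁻ y in A, ENNReal.ofReal (‖y‖ ^ s) * f y := by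
  rw [powMeas, restrict_withDensity hA, lintegral_withDensity_eq_lintegral_mul_non_measurable _
    (by fun_prop) (by simp)]
  rfl

/-- The change of variables between the weights `|x|^s` and `|y|^t` with `s + t = 2(p - n)`
preserves the `p`-energy. -/
lemma energy_invGrad {p s t : ℝ} (hp : 0 ≤ p) (hst : s + t = 2 * (p - n))
    {A : Set (EuclideanSpace ℝ (Fin n))} (hA : MeasurableSet A)
    (h0 : (0 : EuclideanSpace ℝ (Fin n)) ∉ A) (f : EuclideanSpace ℝ (Fin n) → ℝ≥0∞) :
    ∫⁻ y in A, invGrad f y ^ p ∂(powMeas n t) = ∫⁻ x in sphInv '' A, f x ^ p ∂(powMeas n s) := by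
  rw [setLIntegral_powMeas _ hA, setLIntegral_powMeas _ (by rw [image_sphInv]; exact measurable_sphInv hA),
    lintegral_image_sphInv hA h0]
  refine setLIntegral_congr_fun hA fun y hy => ?_
  have hy0 : y ≠ 0 := fun h => h0 (h ▸ hy)
  have hn : 0 < ‖y‖ := norm_pos_iff.2 hy0
  simp only [invGrad]
  rw [ENNReal.mul_rpow_of_nonneg _ _ hp, ENNReal.ofReal_rpow_of_nonneg (by positivity) hp,
    mul_left_comm, ← ENNReal.ofReal_mul (by positivity), ← mul_assoc (ENNReal.ofReal _),
    ← ENNReal.ofReal_mul (by positivity), mul_comm]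
  congr 2
  rw [norm_sphInv, ← Real.rpow_natCast, ← Real.rpow_natCast, ← Real.rpow_neg hn.le,
    ← Real.rpow_neg_one ‖y‖, ← Real.rpow_mul hn.le, ← Real.rpow_mul hn.le, ← Real.rpow_mul hn.le,
    ← Real.rpow_add hn, ← Real.rpow_add hn]
  congr 1
  push_cast
  linarith

lemma powMeas_singleton_zero [NeZero n] (s : ℝ) : powMeas n s {0} = 0 := by
  apply withDensity_absolutelyContinuous
  simp

end Inversion

/-! ### Curves under the inversion -/

section Curves

open scoped Topology

variable {n : ℕ}

/-- A `1`-Lipschitz curve `γ` avoiding the origin is carried by the inversion to the curve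
`Φ ∘ γ ∘ σ⁻¹`, where `σ(t) = ∫₀ᵗ |γ|⁻²`. It is again `1`-Lipschitz because
`|Φ(γ(t)) - Φ(γ(s))| = |γ(t) - γ(s)| / (|γ(t)| |γ(s)|)` has right slopes at most `σ'`. -/
lemma exists_inverted_curve (γ : CurveD (EuclideanSpace ℝ (Fin n)) dist)
    {A : Set (EuclideanSpace ℝ (Fin n))} (hγ : γ.inSet A)
    (h0 : (0 : EuclideanSpace ℝ (Fin n)) ∉ A) :
    ∃ γ' : CurveD (EuclideanSpace ℝ (Fin n)) dist,
      γ'.toFun 0 = sphInv (γ.toFun 0) ∧ γ'.toFun γ'.len = sphInv (γ.toFun γ.len) ∧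
      γ'.inSet (sphInv '' A) ∧
      ∀ ρ : EuclideanSpace ℝ (Fin n) → ℝ≥0∞,
        lineInt γ' ρ (fun _ => 1) = lineInt γ (invGrad ρ) (fun _ => 1) := by
  obtain ⟨c, L, hL, hlip⟩ := γ
  simp only [CurveD.inSet] at hγ
  have hne : ∀ t ∈ Icc 0 L, c t ≠ 0 := fun t ht h => h0 (h ▸ hγ t ht)
  have hpos : ∀ t ∈ Icc 0 L, 0 < ‖c t‖ := fun t ht => norm_pos_iff.2 (hne t ht)
  have hc : ContinuousOn c (Icc 0 L) := by
    have : LipschitzOnWith 1 c (Icc 0 L) :=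
      LipschitzOnWith.of_dist_le_mul fun s hs t ht => by
        simpa [Real.dist_eq] using hlip s hs t ht
    exact this.continuousOn
  -- The density `|γ|⁻²`, extended by constants beyond the ends so that it is continuous on `ℝ`.
  set v : ℝ → ℝ := IccExtend hL.le fun t => (‖c t‖ ^ 2)⁻¹ with hv
  have hvI : ∀ t ∈ Icc 0 L, v t = (‖c t‖ ^ 2)⁻¹ := fun t ht => by
    rw [hv, IccExtend_of_mem _ _ ht]
  have hvpos : ∀ t, 0 < v t := fun t => by
    have := hpos _ (projIcc 0 L hL.le t).2
    simp only [hv, IccExtend, Function.comp]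
    positivity
  have hvc : Continuous v := by
    refine Continuous.Icc_extend' ?_
    have : ContinuousOn (fun t => (‖c t‖ ^ 2)⁻¹) (Icc 0 L) :=
      (hc.norm.pow 2).inv₀ fun t ht => (pow_pos (hpos t ht) 2).ne'
    exact this.domRestrict
  set σ : ℝ → ℝ := fun t => ∫ τ in (0:ℝ)..t, v τ with hσ
  have hσd : ∀ t, HasDerivAt σ (v t) t := fun t =>
    intervalIntegral.integral_hasDerivAt_right (hvc.intervalIntegrable _ _)
      (hvc.stronglyMeasurableAtFilter _ _) hvc.continuousAt
  have hσc : Continuous σ := continuous_iff_continuousAt.2 fun t => (hσd t).continuousAt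
  have hσm : StrictMono σ := strictMono_of_hasDerivAt_pos hσd hvpos
  have hσ0 : σ 0 = 0 := by simp [hσ]
  have himg : σ '' Icc 0 L = Icc 0 (σ L) := by
    apply Subset.antisymm
    · rintro _ ⟨t, ht, rfl⟩
      exact ⟨hσ0 ▸ hσm.monotone ht.1, hσm.monotone ht.2⟩
    · have := intermediate_value_Icc hL.le hσc.continuousOn
      rwa [hσ0] at this
  have hinv : ∀ t, Function.invFun σ (σ t) = t := Function.leftInverse_invFun hσm.injective
  have key : ∀ s ∈ Icc 0 L, ∀ t ∈ Icc 0 L, s ≤ t →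
      dist (sphInv (c t)) (sphInv (c s)) ≤ σ t - σ s := by
    intro s hs t ht hst
    have hsub : Icc s t ⊆ Icc 0 L := Icc_subset_Icc hs.1 ht.2
    have hΦc : ContinuousOn (fun z => sphInv (c z)) (Icc 0 L) := by
      unfold sphInv
      exact ((hc.norm.pow 2).inv₀ fun t ht => (pow_pos (hpos t ht) 2).ne').smul hc
    refine image_le_of_liminf_slope_right_le_deriv_boundary
      (f := fun z => dist (sphInv (c z)) (sphInv (c s))) (B := fun z => σ z - σ s) (B' := v)
      (continuous_dist.comp_continuousOn ((hΦc.mono hsub).prodMk continuousOn_const)) (by simp) (by fun_prop)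
      (fun x _ => ((hσd x).sub_const _).hasDerivWithinAt) ?_ (right_mem_Icc.2 hst)
    intro x hx r hr
    have hxI : x ∈ Icc 0 L := hsub ⟨hx.1, hx.2.le⟩
    have hxL : x < L := hx.2.trans_le ht.2
    have hev : ∀ᶠ z in 𝓝[>] x, z ∈ Icc 0 L ∧ x < z := by
      filter_upwards [Ioo_mem_nhdsGT hxL] with z hz
      exact ⟨⟨hxI.1.trans hz.1.le, hz.2.le⟩, hz.1⟩
    have hle : 𝓝[>] x ≤ 𝓝[Icc 0 L] x :=
      le_inf nhdsWithin_le_nhds (le_principal_iff.2 (hev.mono fun z hz => hz.1))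
    have hcx : Tendsto c (𝓝[>] x) (𝓝 (c x)) := (hc x hxI).mono_left hle
    have hlim : Tendsto (fun z => (‖c z‖ * ‖c x‖)⁻¹) (𝓝[>] x) (𝓝 (v x)) := by
      rw [hvI x hxI, pow_two]
      exact (hcx.norm.mul_const _).inv₀ (mul_pos (hpos x hxI) (hpos x hxI)).ne'
    refine Eventually.frequently ?_
    filter_upwards [hlim.eventually_lt_const hr, hev] with z hz hz'
    refine lt_of_le_of_lt ?_ hz
    have hzx : 0 < z - x := sub_pos.2 hz'.2
    rw [slope_def_field, div_le_iff₀ hzx]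
    calc _ ≤ dist (sphInv (c z)) (sphInv (c x)) := by
          linarith [dist_triangle (sphInv (c z)) (sphInv (c x)) (sphInv (c s))]
      _ = (‖c z‖ * ‖c x‖)⁻¹ * dist (c z) (c x) := dist_sphInv (hne z hz'.1) (hne x hxI)
      _ ≤ _ := by
          gcongr
          exact (hlip z hz'.1 x hxI).trans_eq (abs_of_pos hzx)
  refine ⟨⟨fun s => sphInv (c (Function.invFun σ s)), σ L, hσ0 ▸ hσm hL, ?_⟩, ?_, ?_, ?_, ?_⟩
  · rw [← himg]
    rintro _ ⟨s, hs, rfl⟩ _ ⟨t, ht, rfl⟩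
    rw [hinv, hinv]
    rcases le_total s t with h | h
    · rw [dist_comm, abs_sub_comm]
      exact (key s hs t ht h).trans (le_abs_self _)
    · exact (key t ht s hs h).trans (le_abs_self _)
  · simp only
    rw [← hσ0, hinv, hσ0]
  · simp only [hinv]
  · simp only [CurveD.inSet]
    rw [← himg]
    rintro _ ⟨t, ht, rfl⟩
    rw [hinv]
    exact mem_image_of_mem _ (hγ t ht)
  · intro ρ
    simp only [lineInt, mul_one]
    rw [← himg, lintegral_image_eq_lintegral_abs_deriv_mul measurableSet_Icc
      (fun t _ => (hσd t).hasDerivWithinAt) hσm.injective.injOn]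
    refine setLIntegral_congr_fun measurableSet_Icc fun t ht => ?_
    simp only [hinv, invGrad]
    rw [abs_of_pos (hvpos t), hvI t ht, mul_comm]

end Curves

/-! ### Transport of weak upper gradients -/

section Transport

variable {n : ℕ}

/-- Almost every curve for the weight `|x|^s` corresponds under inversion to almost every curve
for the dual weight, so weak upper gradients are transported by `invGrad`. -/
lemma IsPWUGOn.invGrad [NeZero n] {p s t : ℝ} (hp : 0 < p) (hst : s + t = 2 * (p - n))
    {A : Set (EuclideanSpace ℝ (Fin n))} (h0 : (0 : EuclideanSpace ℝ (Fin n)) ∉ A)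
    {u : EuclideanSpace ℝ (Fin n) → EReal} {g : EuclideanSpace ℝ (Fin n) → ℝ≥0∞}
    (hg : IsPWUGOn dist p (powMeas n s) (fun _ => 1) A u g) :
    IsPWUGOn dist p (powMeas n t) (fun _ => 1) (sphInv '' A) (fun y => u (sphInv y))
      (invGrad g) := by
  obtain ⟨Γ, hΓ, hu⟩ := hg
  refine ⟨{γ | ∃ γ' ∈ Γ, ∀ ρ : EuclideanSpace ℝ (Fin n) → ℝ≥0∞,
    lineInt γ' ρ (fun _ => 1) = lineInt γ (_root_.invGrad ρ) (fun _ => 1)}, ?_, ?_⟩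
    -- If `ρ` is admissible for `Γ`, then `invGrad ρ` is admissible for the inverted family and
    -- has the same energy, so the inverted family has modulus at most that of `Γ`.
  · rw [← nonpos_iff_eq_zero, ← hΓ]
    refine le_iInf fun ρ => le_iInf fun hρ => le_iInf fun hadm => ?_
    have hm : Measurable (_root_.invGrad ρ) := by
      unfold _root_.invGrad
      exact (hρ.comp measurable_sphInv).mul (by fun_prop)
    refine ((iInf_le _ (_root_.invGrad ρ)).trans ((iInf_le _ hm).trans (iInf_le _ ?_))).trans
      (le_of_eq ?_)
    · rintro γ ⟨γ', hγ', h⟩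
      exact (hadm γ' hγ').trans_eq (h ρ)
    · have hc : ∀ r : ℝ, ∀ f : EuclideanSpace ℝ (Fin n) → ℝ≥0∞,
          ∫⁻ y, f y ∂(powMeas n r) = ∫⁻ y in {0}ᶜ, f y ∂(powMeas n r) := fun r f => by
        rw [setLIntegral_congr (t := univ), setLIntegral_univ]
        exact ae_eq_univ.2 (by rw [compl_compl]; exact powMeas_singleton_zero r)
      rw [hc t, hc s, energy_invGrad hp.le hst (measurableSet_singleton 0).compl (by simp)]
      congr 2
      ext x
      rw [image_sphInv, mem_preimage, mem_compl_singleton_iff, mem_compl_singleton_iff, not_iff_not,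
        ← sphInv_injective.eq_iff (a := x), sphInv_zero]
  · intro γ hγ hγΓ
    obtain ⟨γ', h1, h2, h3, h4⟩ := exists_inverted_curve γ hγ (zero_notMem_image h0)
    rw [sphInv_image_image] at h3
    simp only
    rw [← h1, ← h2, ← h4]
    exact hu γ' h3 fun h => hγΓ ⟨γ', h, h4⟩

lemma IsLocLp.invGrad {p s t : ℝ} (hp : 0 < p) (hst : s + t = 2 * (p - n))
    {A : Set (EuclideanSpace ℝ (Fin n))} (hA : MeasurableSet A)
    (h0 : (0 : EuclideanSpace ℝ (Fin n)) ∉ A)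
    {g : EuclideanSpace ℝ (Fin n) → ℝ≥0∞} (hg : IsLocLp p (powMeas n s) A g) :
    IsLocLp p (powMeas n t) (sphInv '' A) (invGrad g) := by
  rintro _ ⟨x, hx, rfl⟩
  obtain ⟨r, hr, hlt⟩ := hg x hx
  have hx0 : sphInv x ≠ 0 := fun h => h0 (by rwa [← sphInv_sphInv x, h, sphInv_zero] at hx)
  obtain ⟨D, hD, -⟩ := sphInv_hasFDerivAt hx0
  obtain ⟨r', hr', hsub⟩ := Metric.continuousAt_iff.1 hD.continuousAt r hr
  rw [sphInv_sphInv] at hsub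
  refine ⟨r', hr', lt_of_le_of_lt ?_ hlt⟩
  rw [energy_invGrad hp.le hst
    (((image_sphInv A).symm ▸ measurable_sphInv hA).inter measurableSet_ball)
    fun h => zero_notMem_image h0 h.1]
  refine lintegral_mono_set ?_
  rintro _ ⟨y, ⟨⟨z, hz, rfl⟩, hy⟩, rfl⟩
  exact ⟨by rwa [sphInv_sphInv], hsub hy⟩

/-- The weight `|y|^s` is positive off the origin, so its null sets there are the Lebesgue ones. -/
lemma ae_restrict_powMeas_iff {s : ℝ} {A : Set (EuclideanSpace ℝ (Fin n))} (hA : MeasurableSet A)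
    (h0 : (0 : EuclideanSpace ℝ (Fin n)) ∉ A) {P : EuclideanSpace ℝ (Fin n) → Prop} :
    (∀ᵐ y ∂((powMeas n s).restrict A), P y) ↔ ∀ᵐ y ∂(volume.restrict A), P y := by
  rw [ae_restrict_iff' hA, ae_restrict_iff' hA, powMeas, ae_withDensity_iff (by fun_prop)]
  refine eventually_congr (Eventually.of_forall fun y => ⟨fun h hy => h ?_ hy, fun h _ => h⟩)
  have : 0 < ‖y‖ := norm_pos_iff.2 fun h => h0 (h ▸ hy)
  simpa using Real.rpow_pos_of_pos this s

end Transport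

/-- Under the spherical inversion `Φ(x) = x/|x|²` of `ℝⁿ \ {0}`, with the
target equipped with `dμ̂(y) = |y|^{2(p-n)} dy`, the minimal `p`-weak upper
gradients of `u` and `û = u ∘ Φ⁻¹ = u ∘ Φ` satisfy
`ĝ_û(y) = g_u(Φ(y))/|y|²` a.e., and the `p`-energies coincide. -/
theorem inversion_preserves_p_energy
    (n : ℕ) (hn : 2 ≤ n) (p : ℝ) (hp : 1 < p)
    (Ω : Set (EuclideanSpace ℝ (Fin n))) (hΩ : IsOpen Ω)
    (h0 : (0 : EuclideanSpace ℝ (Fin n)) ∉ Ω)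
    (u : EuclideanSpace ℝ (Fin n) → ℝ)
    (hloc : ∀ x ∈ Ω, ∃ r > (0:ℝ), ∃ g₀ : EuclideanSpace ℝ (Fin n) → ℝ≥0∞,
      Measurable g₀ ∧
      IsUpperGradientOn dist (fun _ => 1) (Ω ∩ Metric.ball x r)
        (fun y => (u y : EReal)) g₀ ∧
      ∫⁻ y in Ω ∩ Metric.ball x r, g₀ y ^ p ∂volume < ⊤)
    (g gh : EuclideanSpace ℝ (Fin n) → ℝ≥0∞)
    (hg : IsMinimalPWUGOn dist p volume (fun _ => 1) Ω (fun y => (u y : EReal)) g)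
    (hgh : IsMinimalPWUGOn dist p
      (volume.withDensity fun y => ENNReal.ofReal (‖y‖ ^ (2 * (p - n))))
      (fun _ => 1)
      ((fun x : EuclideanSpace ℝ (Fin n) => (‖x‖ ^ 2)⁻¹ • x) '' Ω)
      (fun y => (u ((‖y‖ ^ 2)⁻¹ • y) : EReal)) gh) :
    (∀ᵐ y ∂(volume.restrict ((fun x : EuclideanSpace ℝ (Fin n) => (‖x‖ ^ 2)⁻¹ • x) '' Ω)),
      gh y = g ((‖y‖ ^ 2)⁻¹ • y) * ENNReal.ofReal (‖y‖ ^ 2)⁻¹) ∧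
    ∫⁻ y in (fun x : EuclideanSpace ℝ (Fin n) => (‖x‖ ^ 2)⁻¹ • x) '' Ω,
        gh y ^ p ∂(volume.withDensity fun y => ENNReal.ofReal (‖y‖ ^ (2 * (p - n)))) =
      ∫⁻ x in Ω, g x ^ p ∂volume := by
  have : NeZero n := ⟨by omega⟩
  have hp0 : 0 < p := by linarith
  change IsMinimalPWUGOn dist p (powMeas n (2 * (p - n))) (fun _ => 1) (sphInv '' Ω)
    (fun y => (u (sphInv y) : EReal)) gh at hgh
  change (∀ᵐ y ∂(volume.restrict (sphInv '' Ω)), gh y = invGrad g y) ∧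
    ∫⁻ y in sphInv '' Ω, gh y ^ p ∂(powMeas n (2 * (p - n))) = ∫⁻ x in Ω, g x ^ p ∂volume
  have hvol : (volume : Measure (EuclideanSpace ℝ (Fin n))) = powMeas n 0 := by
    simp [powMeas]
  have h0' := zero_notMem_image h0
  have hΩm := hΩ.measurableSet
  have hΩ'm : MeasurableSet (sphInv '' Ω) := by
    rw [image_sphInv]; exact measurable_sphInv hΩm
  obtain ⟨hg1, hg2, hg3⟩ := hg
  obtain ⟨hh1, hh2, hh3⟩ := hgh
  rw [hvol] at hg1 hg2
  have hle : ∀ᵐ y ∂(volume.restrict (sphInv '' Ω)), gh y ≤ invGrad g y :=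
    (ae_restrict_powMeas_iff hΩ'm h0').1 <|
      hh3 _ (hg1.invGrad hp0 (by ring) h0) (hg2.invGrad hp0 (by ring) hΩm h0)
  have hge : ∀ᵐ x ∂(volume.restrict Ω), g x ≤ invGrad gh x := by
    refine hg3 _ ?_ ?_
    · have := hh1.invGrad (t := 0) hp0 (by ring) h0'
      rw [sphInv_image_image, ← hvol] at this
      simpa only [sphInv_sphInv] using this
    · have := hh2.invGrad (t := 0) hp0 (by ring) hΩ'm h0'
      rwa [sphInv_image_image, ← hvol] at this
  -- Inversion preserves null sets off the origin, so `hge` may be evaluated at `Φ(y)`.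
  have hge' : ∀ᵐ y ∂(volume.restrict (sphInv '' Ω)), g (sphInv y) ≤ invGrad gh (sphInv y) := by
    rw [ae_restrict_iff' hΩm] at hge
    rw [ae_restrict_iff' hΩ'm]
    have h := volume_image_sphInv_eq_zero (by simp [h0]) (ae_iff.1 hge)
    rw [image_sphInv] at h
    refine measure_mono_null (fun y hy => ?_) h
    refine fun hy' => hy fun hyΩ => hy' ?_
    rwa [image_sphInv] at hyΩ
  have hae : ∀ᵐ y ∂(volume.restrict (sphInv '' Ω)), gh y = invGrad g y := by
    filter_upwards [hle, hge', ae_restrict_mem hΩ'm] with y h1 h2 hy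
    refine le_antisymm h1 ?_
    have hy0 : 0 < ‖y‖ := norm_pos_iff.2 fun h => h0' (h ▸ hy)
    calc invGrad g y
        ≤ invGrad gh (sphInv y) * ENNReal.ofReal (‖y‖ ^ 2)⁻¹ := by
          unfold invGrad at h2 ⊢
          gcongr
      _ = gh y := by
          rw [invGrad, sphInv_sphInv, norm_sphInv, mul_assoc, ← ENNReal.ofReal_mul (by positivity),
            show (((‖y‖⁻¹) ^ 2)⁻¹ * (‖y‖ ^ 2)⁻¹ : ℝ) = 1 by field_simp, ENNReal.ofReal_one, mul_one]
  refine ⟨hae, ?_⟩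
  rw [lintegral_congr_ae (g := fun y => invGrad g y ^ p)
      (((ae_restrict_powMeas_iff hΩ'm h0').2 hae).mono fun y hy => by simp only [hy]),
    energy_invGrad hp0.le (s := 0) (by ring) hΩ'm h0', sphInv_image_image, ← hvol]
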